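/- arXiv:2111.06297 — 2 statements merged into one kernel-verified Lean document; each statement's English description precedes it below -/
import Mathlib

section
/- Let -∞ < s₀ < s₁ < ∞, θ ∈ (0,1), s = (1-θ)s₀+θs₁, and p, q ∈ (0,∞) with p ≥ q. Then for all sequences ξ = (ξ_j)_{j∈ℤ}: c (1/θ^{1/p} + 1/(1-θ)^{1/p}) ‖ξ‖_{ℓ_p^s(ℤ)} ≤ ‖ξ‖_{(ℓ_q^{s₀}(ℤ), ℓ_q^{s₁}(ℤ))_{θ,p}} ≤ C (1/θ^{1/q} + 1/(1-θ)^{1/q}) ‖ξ‖_{ℓ_p^s(ℤ)}, where c, C > 0 are independent of θ. -/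
open scoped ENNReal

/-- The K-functional of a compatible pair of (quasi-)seminormed spaces. -/
noncomputable def KfunE {V : Type*} [AddCommGroup V] (N0 N1 : V → ℝ≥0∞) (t : ℝ) (f : V) : ℝ≥0∞ :=
  ⨅ (f0 : V) (f1 : V) (_ : f = f0 + f1), N0 f0 + ENNReal.ofReal t * N1 f1

/-- The real interpolation (quasi-)norm. -/
noncomputable def interpNormE {V : Type*} [AddCommGroup V] (N0 N1 : V → ℝ≥0∞) (θ p : ℝ)
    (f : V) : ℝ≥0∞ :=
  (∫⁻ t in Set.Ioi (0 : ℝ),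
      (ENNReal.ofReal (t ^ (-θ)) * KfunE N0 N1 t f) ^ p / ENNReal.ofReal t) ^ (1 / p)

/-- The weighted sequence space norm `‖ξ‖_{ℓ_q^s(ℤ)} = (Σ_j (2^{js}|ξ_j|)^q)^{1/q}`. -/
noncomputable def lqsNorm (s q : ℝ) (ξ : ℤ → ℝ) : ℝ≥0∞ :=
  (∑' j : ℤ, (ENNReal.ofReal ((2 : ℝ) ^ ((j : ℝ) * s) * |ξ j|)) ^ q) ^ (1 / q)

/-!
For the weighted spaces `ℓ_q(w₀)` and `ℓ_q(w₁)`, splitting a sequence according to whether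
`w₀ j ≤ t * w₁ j` shows that the K-functional at `t` is, up to a constant, the `ℓ_q` norm with
weight `min w₀ (t * w₁)`. In the variable `x = log t`, the weight `t ^ (-θ) * min w₀ (t * w₁)` is
`w₀ ^ (1 - θ) * w₁ ^ θ` times the translate by `log (w₁ / w₀)` of the profile
`min (e^{-θ x}) (e^{(1 - θ) x})`.

The `p`-th power of this profile has integral `(θ⁻¹ + (1 - θ)⁻¹) / p`, so the lower bound follows
from `ℓ_q ⊆ ℓ_p` and Tonelli's theorem. The upper bound is Schur's test with exponent `p / q`: for
dyadic weights the translations run through an arithmetic progression of nonzero step, and both the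
integral of the `q`-th power of the profile and its sum over such a progression are
`O(θ⁻¹ + (1 - θ)⁻¹)`.
-/

open MeasureTheory Set

section PowerInequalities

variable {ι : Type*}

lemma add_rpow_le_two_rpow_mul (x y : ℝ≥0∞) {r : ℝ} (hr : 0 ≤ r) :
    (x + y) ^ r ≤ 2 ^ r * (x ^ r + y ^ r) := by
  wlog hxy : x ≤ y generalizing x y
  · simpa only [add_comm] using this y x (le_of_not_ge hxy)
  calc (x + y) ^ r ≤ (2 * y) ^ r := by rw [two_mul]; gcongr
    _ = 2 ^ r * y ^ r := ENNReal.mul_rpow_of_nonneg _ _ hr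
    _ ≤ 2 ^ r * (x ^ r + y ^ r) := by gcongr; exact le_add_self

lemma rpow_add_rpow_le_two_mul (x y : ℝ≥0∞) {r : ℝ} (hr : 0 ≤ r) :
    x ^ r + y ^ r ≤ 2 * (x + y) ^ r := by
  rw [two_mul]
  gcongr
  exacts [le_self_add, le_add_self]

lemma ofReal_rpow_neg_add_rpow_neg {a b : ℝ} (ha : 0 < a) (hb : 0 < b) (r : ℝ) :
    ENNReal.ofReal (a ^ (-r) + b ^ (-r)) = ENNReal.ofReal a⁻¹ ^ r + ENNReal.ofReal b⁻¹ ^ r := by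
  rw [ENNReal.ofReal_add (by positivity) (by positivity), ENNReal.ofReal_rpow_of_pos (inv_pos.2 ha),
    ENNReal.ofReal_rpow_of_pos (inv_pos.2 hb), Real.inv_rpow ha.le, Real.inv_rpow hb.le,
    Real.rpow_neg ha.le, Real.rpow_neg hb.le]

lemma ofReal_rpow_mul_le_two_mul {a b c : ℝ} (ha : 0 < a) (hb : 0 < b) (hc : 0 ≤ c) {r : ℝ}
    (hr : 0 ≤ r) : ENNReal.ofReal (c ^ r * (a ^ (-r) + b ^ (-r))) ≤
      2 * ENNReal.ofReal (c * (a⁻¹ + b⁻¹)) ^ r := by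
  rw [ENNReal.ofReal_mul (by positivity), ofReal_rpow_neg_add_rpow_neg ha hb,
    ENNReal.ofReal_mul hc, ENNReal.ofReal_add (by positivity) (by positivity),
    ENNReal.mul_rpow_of_nonneg _ _ hr, ENNReal.ofReal_rpow_of_nonneg hc hr, mul_left_comm]
  gcongr
  exact rpow_add_rpow_le_two_mul _ _ hr

lemma ofReal_mul_inv_add_inv_rpow_le {a b c : ℝ} (ha : 0 < a) (hb : 0 < b) (hc : 0 ≤ c) {r : ℝ}
    (hr : 0 ≤ r) : ENNReal.ofReal (c * (a⁻¹ + b⁻¹)) ^ r ≤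
      ENNReal.ofReal ((2 * c) ^ r * (a ^ (-r) + b ^ (-r))) := by
  rw [ENNReal.ofReal_mul hc, ENNReal.ofReal_mul (by positivity),
    ofReal_rpow_neg_add_rpow_neg ha hb, ENNReal.ofReal_add (by positivity) (by positivity),
    ENNReal.mul_rpow_of_nonneg _ _ hr, ← ENNReal.ofReal_rpow_of_nonneg (by positivity) hr,
    ENNReal.ofReal_mul zero_le_two, ENNReal.mul_rpow_of_nonneg _ _ hr, ENNReal.ofReal_ofNat,
    mul_comm (2 ^ r), mul_assoc]
  gcongr
  exact add_rpow_le_two_rpow_mul _ _ hr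

lemma rpow_sub_one_mul_self (x : ℝ≥0∞) {r : ℝ} (hr : 1 ≤ r) : x ^ (r - 1) * x = x ^ r := by
  nth_rw 2 [← ENNReal.rpow_one x]
  rw [← ENNReal.rpow_add_of_nonneg _ _ (sub_nonneg.2 hr) zero_le_one, sub_add_cancel]

lemma tsum_rpow_le_rpow_tsum (a : ι → ℝ≥0∞) {r : ℝ} (hr : 1 ≤ r) :
    ∑' i, a i ^ r ≤ (∑' i, a i) ^ r := by
  calc ∑' i, a i ^ r = ∑' i, a i ^ (r - 1) * a i := by simp only [rpow_sub_one_mul_self _ hr]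
    _ ≤ ∑' i, (∑' k, a k) ^ (r - 1) * a i := by gcongr with i; exact ENNReal.le_tsum i
    _ = (∑' i, a i) ^ r := by rw [ENNReal.tsum_mul_left, rpow_sub_one_mul_self _ hr]

lemma rpow_tsum_mul_le (w a : ι → ℝ≥0∞) {r : ℝ} (hr : 1 ≤ r) :
    (∑' i, w i * a i) ^ r ≤ (∑' i, w i) ^ (r - 1) * ∑' i, w i * a i ^ r := by
  have hr₀ : 0 < r := zero_lt_one.trans_le hr
  have hr' : 0 ≤ 1 - r⁻¹ := sub_nonneg.2 (inv_le_one_of_one_le₀ hr)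
  have hölder : ∑' i, w i * a i ≤ (∑' i, w i) ^ (1 - r⁻¹) * (∑' i, w i * a i ^ r) ^ r⁻¹ := by
    rw [ENNReal.tsum_eq_iSup_sum]
    refine iSup_le fun s => (ENNReal.inner_le_weight_mul_Lp_of_nonneg s hr w a).trans ?_
    gcongr <;> exact ENNReal.sum_le_tsum s
  calc (∑' i, w i * a i) ^ r
      ≤ ((∑' i, w i) ^ (1 - r⁻¹) * (∑' i, w i * a i ^ r) ^ r⁻¹) ^ r := by gcongr
    _ = (∑' i, w i) ^ (r - 1) * ∑' i, w i * a i ^ r := by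
      rw [ENNReal.mul_rpow_of_nonneg _ _ hr₀.le, ENNReal.rpow_inv_rpow hr₀.ne', ← ENNReal.rpow_mul,
        sub_mul, one_mul, inv_mul_cancel₀ hr₀.ne']

/- Schur's test: the sup bound on `∑' i, κ i x` pays for `r - 1` of the powers of `M`, the bound
on the integrals `∫⁻ x, κ i x ∂μ` for the remaining one. -/
lemma lintegral_rpow_tsum_mul_le [Countable ι] {α : Type*} [MeasurableSpace α] {μ : Measure α}
    {κ : ι → α → ℝ≥0∞} (hκ : ∀ i, Measurable (κ i)) {M : ℝ≥0∞} (hsum : ∀ x, ∑' i, κ i x ≤ M)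
    (hint : ∀ i, ∫⁻ x, κ i x ∂μ ≤ M) (a : ι → ℝ≥0∞) {r : ℝ} (hr : 1 ≤ r) :
    ∫⁻ x, (∑' i, κ i x * a i) ^ r ∂μ ≤ M ^ r * ∑' i, a i ^ r := by
  have hr' : 0 ≤ r - 1 := sub_nonneg.2 hr
  calc ∫⁻ x, (∑' i, κ i x * a i) ^ r ∂μ
      ≤ ∫⁻ x, M ^ (r - 1) * ∑' i, κ i x * a i ^ r ∂μ := by
        gcongr with x
        grw [rpow_tsum_mul_le _ _ hr, hsum x]
    _ = M ^ (r - 1) * ∑' i, (∫⁻ x, κ i x ∂μ) * a i ^ r := by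
        rw [lintegral_const_mul _ (by fun_prop), lintegral_tsum fun i => by fun_prop]
        simp only [lintegral_mul_const _ (hκ _)]
    _ ≤ M ^ (r - 1) * ∑' i, M * a i ^ r := by gcongr with i; exact hint i
    _ = M ^ r * ∑' i, a i ^ r := by
        rw [ENNReal.tsum_mul_left, ← mul_assoc, rpow_sub_one_mul_self _ hr]

end PowerInequalities

section WeightedLqNorm

variable {ι : Type*} {v w : ι → ℝ} {p q : ℝ}

/-- The (quasi-)norm of the weighted space `ℓ_q(w)` over an arbitrary index type; `lqsNorm s q` is
the case `w j = 2 ^ (j * s)`. Weights are real so that lattice operations and powers of weights are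
the pointwise ones. -/
noncomputable def weightedLqNorm (w : ι → ℝ) (q : ℝ) (ξ : ι → ℝ) : ℝ≥0∞ :=
  (∑' j, ENNReal.ofReal (w j * |ξ j|) ^ q) ^ (1 / q)

lemma weightedLqNorm_rpow (hq : 0 < q) (w ξ : ι → ℝ) :
    weightedLqNorm w q ξ ^ q = ∑' j, ENNReal.ofReal (w j * |ξ j|) ^ q := by
  rw [weightedLqNorm, one_div, ENNReal.rpow_inv_rpow hq.ne']

lemma weightedLqNorm_le_of_forall_le (hq : 0 < q) {ξ η : ι → ℝ}
    (h : ∀ j, w j * |ξ j| ≤ v j * |η j|) : weightedLqNorm w q ξ ≤ weightedLqNorm v q η := by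
  unfold weightedLqNorm
  gcongr ?_ ^ _
  exact ENNReal.tsum_le_tsum fun j => ENNReal.rpow_le_rpow (ENNReal.ofReal_le_ofReal (h j)) hq.le

lemma weightedLqNorm_mono (hq : 0 < q) (hwv : w ≤ v) (ξ : ι → ℝ) :
    weightedLqNorm w q ξ ≤ weightedLqNorm v q ξ :=
  weightedLqNorm_le_of_forall_le hq fun j => mul_le_mul_of_nonneg_right (hwv j) (abs_nonneg _)

lemma weightedLqNorm_indicator_le (hq : 0 < q) (hv : 0 ≤ v) {s : Set ι} (h : ∀ j ∈ s, w j ≤ v j)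
    (ξ : ι → ℝ) : weightedLqNorm w q (s.indicator ξ) ≤ weightedLqNorm v q ξ := by
  refine weightedLqNorm_le_of_forall_le hq fun j => ?_
  by_cases hj : j ∈ s
  · rw [indicator_of_mem hj]
    exact mul_le_mul_of_nonneg_right (h j hj) (abs_nonneg _)
  · rw [indicator_of_notMem hj, abs_zero, mul_zero]
    exact mul_nonneg (hv j) (abs_nonneg _)

lemma weightedLqNorm_smul (hq : 0 < q) {t : ℝ} (ht : 0 ≤ t) (w ξ : ι → ℝ) :
    weightedLqNorm (t • w) q ξ = ENNReal.ofReal t * weightedLqNorm w q ξ := by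
  have hterm (j : ι) : ENNReal.ofReal ((t • w) j * |ξ j|) ^ q =
      ENNReal.ofReal t ^ q * ENNReal.ofReal (w j * |ξ j|) ^ q := by
    rw [Pi.smul_apply, smul_eq_mul, mul_assoc, ENNReal.ofReal_mul ht,
      ENNReal.mul_rpow_of_nonneg _ _ hq.le]
  simp only [weightedLqNorm, hterm]
  rw [ENNReal.tsum_mul_left, ENNReal.mul_rpow_of_nonneg _ _ (by positivity), one_div,
    ENNReal.rpow_rpow_inv hq.ne']

lemma weightedLqNorm_anti_exponent (hq : 0 < q) (hqp : q ≤ p) (w ξ : ι → ℝ) :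
    weightedLqNorm w p ξ ≤ weightedLqNorm w q ξ := by
  have hp : 0 < p := hq.trans_le hqp
  rw [weightedLqNorm, one_div, ENNReal.rpow_inv_le_iff hp]
  calc ∑' j, ENNReal.ofReal (w j * |ξ j|) ^ p
      = ∑' j, (ENNReal.ofReal (w j * |ξ j|) ^ q) ^ (p / q) := by
        simp only [← ENNReal.rpow_mul, mul_div_cancel₀ _ hq.ne']
    _ ≤ (∑' j, ENNReal.ofReal (w j * |ξ j|) ^ q) ^ (p / q) :=
        tsum_rpow_le_rpow_tsum _ ((one_le_div hq).2 hqp)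
    _ = weightedLqNorm w q ξ ^ p := by
        rw [← weightedLqNorm_rpow hq, ← ENNReal.rpow_mul, mul_div_cancel₀ _ hq.ne']

lemma weightedLqNorm_add_le (hq : 0 < q) (hw : 0 ≤ w) (f g : ι → ℝ) :
    weightedLqNorm w q (f + g) ≤
      2 ^ (1 + 1 / q) * (weightedLqNorm w q f + weightedLqNorm w q g) := by
  have hterm (j : ι) : ENNReal.ofReal (w j * |(f + g) j|) ^ q ≤
      2 ^ q * (ENNReal.ofReal (w j * |f j|) ^ q + ENNReal.ofReal (w j * |g j|) ^ q) := by
    refine le_trans ?_ (add_rpow_le_two_rpow_mul _ _ hq.le)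
    rw [← ENNReal.ofReal_add (mul_nonneg (hw j) (abs_nonneg _)) (mul_nonneg (hw j) (abs_nonneg _)),
      ← mul_add]
    gcongr
    exacts [hw j, abs_add_le _ _]
  calc weightedLqNorm w q (f + g)
      ≤ (2 ^ q * (weightedLqNorm w q f ^ q + weightedLqNorm w q g ^ q)) ^ (1 / q) := by
        rw [weightedLqNorm_rpow hq, weightedLqNorm_rpow hq, ← ENNReal.tsum_add,
          ← ENNReal.tsum_mul_left, weightedLqNorm]
        gcongr with j
        exact hterm j
    _ = 2 * (weightedLqNorm w q f ^ q + weightedLqNorm w q g ^ q) ^ (1 / q) := by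
        rw [ENNReal.mul_rpow_of_nonneg _ _ (by positivity), one_div, ENNReal.rpow_rpow_inv hq.ne']
    _ ≤ 2 * (2 ^ (1 / q) * (weightedLqNorm w q f + weightedLqNorm w q g)) := by
        grw [add_rpow_le_two_rpow_mul _ _ (by positivity)]
        simp only [one_div, ENNReal.rpow_rpow_inv hq.ne', le_refl]
    _ = 2 ^ (1 + 1 / q) * (weightedLqNorm w q f + weightedLqNorm w q g) := by
        rw [ENNReal.rpow_add _ _ two_ne_zero ENNReal.ofNat_ne_top, ENNReal.rpow_one, mul_assoc]

end WeightedLqNorm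

section KFunctional

variable {ι : Type*} {w₀ w₁ : ι → ℝ} {q t : ℝ}

lemma KfunE_weightedLqNorm_le (hq : 0 < q) (hw₀ : 0 ≤ w₀) (hw₁ : 0 ≤ w₁) (ht : 0 ≤ t)
    (ξ : ι → ℝ) :
    KfunE (weightedLqNorm w₀ q) (weightedLqNorm w₁ q) t ξ ≤
      2 * weightedLqNorm (w₀ ⊓ t • w₁) q ξ := by
  have hinf : 0 ≤ w₀ ⊓ t • w₁ := le_inf hw₀ (smul_nonneg ht hw₁)
  let s : Set ι := {j | w₀ j ≤ (t • w₁) j}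
  have hs : ∀ j ∈ s, w₀ j ≤ (w₀ ⊓ t • w₁) j := fun j hj => le_min le_rfl hj
  have hs' : ∀ j ∈ sᶜ, (t • w₁) j ≤ (w₀ ⊓ t • w₁) j := fun j hj => le_min (le_of_not_ge hj) le_rfl
  calc KfunE (weightedLqNorm w₀ q) (weightedLqNorm w₁ q) t ξ
      ≤ weightedLqNorm w₀ q (s.indicator ξ) +
          ENNReal.ofReal t * weightedLqNorm w₁ q (sᶜ.indicator ξ) :=
        (iInf₂_le _ _).trans (iInf_le _ (s.indicator_self_add_compl ξ).symm)
    _ ≤ 2 * weightedLqNorm (w₀ ⊓ t • w₁) q ξ := by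
        rw [← weightedLqNorm_smul hq ht, two_mul]
        exact add_le_add (weightedLqNorm_indicator_le hq hinf hs ξ)
          (weightedLqNorm_indicator_le hq hinf hs' ξ)

lemma weightedLqNorm_inf_le_KfunE (hq : 0 < q) (hw₀ : 0 ≤ w₀) (hw₁ : 0 ≤ w₁) (ht : 0 ≤ t)
    (ξ : ι → ℝ) :
    weightedLqNorm (w₀ ⊓ t • w₁) q ξ ≤
      2 ^ (1 + 1 / q) * KfunE (weightedLqNorm w₀ q) (weightedLqNorm w₁ q) t ξ := by
  have hinf : 0 ≤ w₀ ⊓ t • w₁ := le_inf hw₀ (smul_nonneg ht hw₁)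
  rw [← ENNReal.inv_mul_le_iff (by simp) (by simp)]
  refine le_iInf₂ fun f g => le_iInf fun hfg => ?_
  rw [ENNReal.inv_mul_le_iff (by simp) (by simp), hfg, ← weightedLqNorm_smul hq ht]
  grw [weightedLqNorm_add_le hq hinf, weightedLqNorm_mono hq inf_le_left f,
    weightedLqNorm_mono hq inf_le_right g]

end KFunctional

section TwoSidedExp

variable {a b r : ℝ}

/-- The profile `min (e^{-a x}) (e^{b x})` peaked at `0`. In the variable `x = log t`, the factor
`t ^ (-θ) * min 1 t` governing the interpolation norm is the profile with `a = θ`, `b = 1 - θ`. -/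
noncomputable def twoSidedExp (a b x : ℝ) : ℝ :=
  min (Real.exp (-a * x)) (Real.exp (b * x))

lemma twoSidedExp_nonneg (a b x : ℝ) : 0 ≤ twoSidedExp a b x :=
  le_min (Real.exp_pos _).le (Real.exp_pos _).le

@[fun_prop]
lemma continuous_twoSidedExp (a b : ℝ) : Continuous (twoSidedExp a b) := by
  unfold twoSidedExp
  fun_prop

lemma twoSidedExp_rpow (a b x : ℝ) (hr : 0 ≤ r) :
    twoSidedExp a b x ^ r = twoSidedExp (a * r) (b * r) x := by
  rw [twoSidedExp, (Real.monotoneOn_rpow_Ici_of_exponent_nonneg hr).map_min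
    (mem_Ici.2 (Real.exp_pos _).le) (mem_Ici.2 (Real.exp_pos _).le), ← Real.exp_mul,
    ← Real.exp_mul, twoSidedExp]
  ring_nf

lemma exp_mul_min_eq_mul_twoSidedExp {A B : ℝ} (hA : 0 < A) (hB : 0 < B) (θ x : ℝ) :
    Real.exp (-θ * x) * min A (Real.exp x * B) =
      A ^ (1 - θ) * B ^ θ * twoSidedExp θ (1 - θ) (x + Real.log (B / A)) := by
  obtain ⟨α, rfl⟩ : ∃ α, Real.exp α = A := ⟨_, Real.exp_log hA⟩
  obtain ⟨β, rfl⟩ : ∃ β, Real.exp β = B := ⟨_, Real.exp_log hB⟩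
  rw [twoSidedExp, mul_min_of_nonneg _ _ (by positivity), mul_min_of_nonneg _ _ (by positivity),
    ← Real.exp_sub, Real.log_exp]
  simp only [← Real.exp_mul, ← Real.exp_add]
  ring_nf

lemma lintegral_twoSidedExp (ha : 0 < a) (hb : 0 < b) :
    ∫⁻ x, ENNReal.ofReal (twoSidedExp a b x) = ENNReal.ofReal (a⁻¹ + b⁻¹) := by
  have hleft : ∫⁻ x in Iic 0, ENNReal.ofReal (twoSidedExp a b x) = ENNReal.ofReal b⁻¹ := by
    have hmin : EqOn (fun x => ENNReal.ofReal (twoSidedExp a b x))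
        (fun x => ENNReal.ofReal (Real.exp (b * x))) (Iic 0) := fun x (hx : x ≤ 0) => by
      simp only [twoSidedExp, min_eq_right (Real.exp_le_exp.2 (by nlinarith : b * x ≤ -a * x))]
    rw [setLIntegral_congr_fun measurableSet_Iic hmin,
      ← ofReal_integral_eq_lintegral_ofReal (integrableOn_exp_mul_Iic hb 0)
        (ae_of_all _ fun x => (Real.exp_pos _).le), integral_exp_mul_Iic hb]
    simp only [mul_zero, Real.exp_zero, one_div]
  have hright : ∫⁻ x in Ioi 0, ENNReal.ofReal (twoSidedExp a b x) = ENNReal.ofReal a⁻¹ := by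
    have hmin : EqOn (fun x => ENNReal.ofReal (twoSidedExp a b x))
        (fun x => ENNReal.ofReal (Real.exp (-a * x))) (Ioi 0) := fun x (hx : 0 < x) => by
      simp only [twoSidedExp, min_eq_left (Real.exp_le_exp.2 (by nlinarith : -a * x ≤ b * x))]
    rw [setLIntegral_congr_fun measurableSet_Ioi hmin,
      ← ofReal_integral_eq_lintegral_ofReal (integrableOn_exp_mul_Ioi (neg_neg_of_pos ha) 0)
        (ae_of_all _ fun x => (Real.exp_pos _).le), integral_exp_mul_Ioi (neg_neg_of_pos ha)]
    simp only [mul_zero, Real.exp_zero, neg_div_neg_eq, one_div]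
  rw [← lintegral_add_compl _ measurableSet_Iic, compl_Iic, hleft, hright,
    ← ENNReal.ofReal_add (by positivity) (by positivity), add_comm]

lemma tsum_exp_neg_mul_nat_le {y : ℝ} (hy : 0 < y) :
    ∑' n : ℕ, ENNReal.ofReal (Real.exp (-(y * n))) ≤ ENNReal.ofReal (1 + y⁻¹) := by
  have hlt : Real.exp (-y) < 1 := Real.exp_lt_one_iff.2 (neg_neg_of_pos hy)
  have hterm (n : ℕ) : Real.exp (-(y * n)) = Real.exp (-y) ^ n := by
    rw [← Real.exp_nat_mul, mul_neg, mul_comm]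
  simp only [hterm]
  rw [← ENNReal.ofReal_tsum_of_nonneg (fun n => by positivity)
    (summable_geometric_of_lt_one (by positivity) hlt),
    tsum_geometric_of_lt_one (by positivity) hlt]
  refine ENNReal.ofReal_le_ofReal ?_
  have hexp : y / (1 + y) ≤ 1 - Real.exp (-y) := by
    have hinv : Real.exp (-y) ≤ (1 + y)⁻¹ := by
      rw [Real.exp_neg, add_comm]
      exact inv_anti₀ (by positivity) (Real.add_one_le_exp y)
    calc y / (1 + y) = 1 - (1 + y)⁻¹ := by field_simp; ring
      _ ≤ 1 - Real.exp (-y) := by gcongr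
  calc (1 - Real.exp (-y))⁻¹ ≤ (y / (1 + y))⁻¹ := inv_anti₀ (by positivity) hexp
    _ = 1 + y⁻¹ := by rw [inv_div, add_div, div_self hy.ne', one_div, add_comm]

lemma tsum_twoSidedExp_le (ha : 0 < a) (hb : 0 < b) {δ : ℝ} (hδ : δ ≠ 0) (x : ℝ) :
    ∑' j : ℤ, ENNReal.ofReal (twoSidedExp a b (x + j * δ)) ≤
      ENNReal.ofReal (1 + (a * |δ|)⁻¹) + ENNReal.ofReal (1 + (b * |δ|)⁻¹) := by
  wlog hpos : 0 < δ generalizing δ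
  · rw [← (Equiv.neg ℤ).tsum_eq, ← abs_neg]
    simpa using this (neg_ne_zero.2 hδ) (neg_pos.2 (lt_of_le_of_ne (not_lt.1 hpos) hδ))
  rw [abs_of_pos hpos]
  obtain ⟨n, y, hy, hyδ, rfl⟩ : ∃ (n : ℤ) (y : ℝ), 0 ≤ y ∧ y < δ ∧ y + n * δ = x :=
    ⟨⌊x / δ⌋, x - ⌊x / δ⌋ * δ, Int.sub_floor_div_mul_nonneg x hpos,
      Int.sub_floor_div_mul_lt x hpos, sub_add_cancel _ _⟩
  have hshift (j : ℤ) : y + n * δ + (Equiv.subRight n j : ℤ) * δ = y + j * δ := by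
    simp only [Equiv.subRight_apply]
    push_cast
    ring
  rw [← (Equiv.subRight n).tsum_eq]
  simp only [hshift]
  rw [tsum_of_nat_of_neg_add_one ENNReal.summable ENNReal.summable]
  grw [← tsum_exp_neg_mul_nat_le (mul_pos ha hpos), ← tsum_exp_neg_mul_nat_le (mul_pos hb hpos)]
  gcongr with m m
  · refine (min_le_left _ _).trans (Real.exp_le_exp.2 ?_)
    push_cast
    nlinarith
  · refine (min_le_right _ _).trans (Real.exp_le_exp.2 ?_)
    push_cast
    nlinarith

end TwoSidedExp

section Interpolation

lemma setLIntegral_Ioi_div_eq_lintegral_exp (f : ℝ → ℝ≥0∞) :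
    ∫⁻ t in Ioi (0 : ℝ), f t / ENNReal.ofReal t = ∫⁻ x, f (Real.exp x) := by
  rw [← Real.range_exp, ← image_univ, lintegral_image_eq_lintegral_abs_deriv_mul MeasurableSet.univ
    (fun x _ => (Real.hasDerivAt_exp x).hasDerivWithinAt) Real.exp_injective.injOn,
    setLIntegral_univ]
  refine lintegral_congr fun x => ?_
  rw [abs_of_pos (Real.exp_pos x), ENNReal.mul_div_cancel
    (ENNReal.ofReal_pos.2 (Real.exp_pos x)).ne' ENNReal.ofReal_ne_top]

lemma interpNormE_eq_lintegral_exp {V : Type*} [AddCommGroup V] (N₀ N₁ : V → ℝ≥0∞) (θ p : ℝ)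
    (f : V) : interpNormE N₀ N₁ θ p f =
      (∫⁻ x, (ENNReal.ofReal (Real.exp (-θ * x)) * KfunE N₀ N₁ (Real.exp x) f) ^ p) ^ (1 / p) := by
  rw [interpNormE, setLIntegral_Ioi_div_eq_lintegral_exp
    fun t => (ENNReal.ofReal (t ^ (-θ)) * KfunE N₀ N₁ t f) ^ p]
  simp only [← Real.exp_mul, mul_comm]

variable {ι : Type*} {w₀ w₁ : ι → ℝ} {p q θ : ℝ}

lemma ofReal_exp_mul_weightedLqNorm_inf_rpow (hq : 0 < q) (hw₀ : ∀ j, 0 < w₀ j)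
    (hw₁ : ∀ j, 0 < w₁ j) (θ x : ℝ) (ξ : ι → ℝ) :
    (ENNReal.ofReal (Real.exp (-θ * x)) * weightedLqNorm (w₀ ⊓ Real.exp x • w₁) q ξ) ^ q =
      ∑' j, ENNReal.ofReal (twoSidedExp (θ * q) ((1 - θ) * q) (x + Real.log (w₁ j / w₀ j))) *
        ENNReal.ofReal ((w₀ ^ (1 - θ) * w₁ ^ θ) j * |ξ j|) ^ q := by
  rw [← weightedLqNorm_smul hq (Real.exp_pos _).le, weightedLqNorm_rpow hq]
  refine tsum_congr fun j => ?_
  have hweight : (Real.exp (-θ * x) • (w₀ ⊓ Real.exp x • w₁)) j =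
      (w₀ ^ (1 - θ) * w₁ ^ θ) j * twoSidedExp θ (1 - θ) (x + Real.log (w₁ j / w₀ j)) :=
    exp_mul_min_eq_mul_twoSidedExp (hw₀ j) (hw₁ j) θ x
  rw [hweight, mul_right_comm, mul_comm, ENNReal.ofReal_mul (twoSidedExp_nonneg _ _ _),
    ENNReal.mul_rpow_of_nonneg _ _ hq.le,
    ENNReal.ofReal_rpow_of_nonneg (twoSidedExp_nonneg _ _ _) hq.le, twoSidedExp_rpow _ _ _ hq.le]

lemma lintegral_twoSidedExp_mul_add_right (hq : 0 < q) (hθ : θ ∈ Ioo (0 : ℝ) 1) (c : ℝ) :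
    ∫⁻ x, ENNReal.ofReal (twoSidedExp (θ * q) ((1 - θ) * q) (x + c)) =
      ENNReal.ofReal (q⁻¹ * (θ⁻¹ + (1 - θ)⁻¹)) := by
  rw [lintegral_add_right_eq_self (fun x => ENNReal.ofReal (twoSidedExp (θ * q) ((1 - θ) * q) x)),
    lintegral_twoSidedExp (mul_pos hθ.1 hq) (mul_pos (sub_pos.2 hθ.2) hq), mul_inv, mul_inv,
    ← add_mul, mul_comm]

variable [Countable ι]

theorem weightedLqNorm_le_interpNormE (hq : 0 < q) (hqp : q ≤ p) (hw₀ : ∀ j, 0 < w₀ j)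
    (hw₁ : ∀ j, 0 < w₁ j) (hθ : θ ∈ Ioo (0 : ℝ) 1) (ξ : ι → ℝ) :
    ENNReal.ofReal (p⁻¹ * (θ⁻¹ + (1 - θ)⁻¹)) ^ (1 / p) *
        weightedLqNorm (w₀ ^ (1 - θ) * w₁ ^ θ) p ξ ≤
      2 ^ (1 + 1 / q) * interpNormE (weightedLqNorm w₀ q) (weightedLqNorm w₁ q) θ p ξ := by
  have hp : 0 < p := hq.trans_le hqp
  have hK (x : ℝ) : weightedLqNorm (w₀ ⊓ Real.exp x • w₁) p ξ ≤
      2 ^ (1 + 1 / q) * KfunE (weightedLqNorm w₀ q) (weightedLqNorm w₁ q) (Real.exp x) ξ :=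
    (weightedLqNorm_anti_exponent hq hqp _ ξ).trans <| weightedLqNorm_inf_le_KfunE hq
      (fun j => (hw₀ j).le) (fun j => (hw₁ j).le) (Real.exp_pos x).le ξ
  have hC : ((2 : ℝ≥0∞) ^ (1 + 1 / q)) ^ p ≠ ∞ := by simp
  have hrpow (y : ℝ≥0∞) : (y ^ p) ^ (1 / p) = y := by rw [one_div, ENNReal.rpow_rpow_inv hp.ne']
  calc ENNReal.ofReal (p⁻¹ * (θ⁻¹ + (1 - θ)⁻¹)) ^ (1 / p) *
        weightedLqNorm (w₀ ^ (1 - θ) * w₁ ^ θ) p ξ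
      = (∫⁻ x, ∑' j,
          ENNReal.ofReal (twoSidedExp (θ * p) ((1 - θ) * p) (x + Real.log (w₁ j / w₀ j))) *
            ENNReal.ofReal ((w₀ ^ (1 - θ) * w₁ ^ θ) j * |ξ j|) ^ p) ^ (1 / p) := by
        rw [lintegral_tsum fun j => by fun_prop, weightedLqNorm,
          ← ENNReal.mul_rpow_of_nonneg _ _ (by positivity), ← ENNReal.tsum_mul_left]
        congr! 3 with j
        rw [lintegral_mul_const _ (by fun_prop), lintegral_twoSidedExp_mul_add_right hp hθ]
    _ = (∫⁻ x, (ENNReal.ofReal (Real.exp (-θ * x)) *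
          weightedLqNorm (w₀ ⊓ Real.exp x • w₁) p ξ) ^ p) ^ (1 / p) := by
        simp only [ofReal_exp_mul_weightedLqNorm_inf_rpow hp hw₀ hw₁]
    _ ≤ (∫⁻ x, (2 ^ (1 + 1 / q)) ^ p * (ENNReal.ofReal (Real.exp (-θ * x)) *
          KfunE (weightedLqNorm w₀ q) (weightedLqNorm w₁ q) (Real.exp x) ξ) ^ p) ^ (1 / p) := by
        gcongr with x
        grw [hK x, mul_left_comm, ENNReal.mul_rpow_of_nonneg _ _ hp.le]
    _ = 2 ^ (1 + 1 / q) * interpNormE (weightedLqNorm w₀ q) (weightedLqNorm w₁ q) θ p ξ := by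
        rw [lintegral_const_mul' _ _ hC, ENNReal.mul_rpow_of_nonneg _ _ (by positivity), hrpow,
          interpNormE_eq_lintegral_exp]

theorem interpNormE_le_weightedLqNorm (hq : 0 < q) (hqp : q ≤ p) (hw₀ : ∀ j, 0 < w₀ j)
    (hw₁ : ∀ j, 0 < w₁ j) (hθ : θ ∈ Ioo (0 : ℝ) 1) {M : ℝ≥0∞}
    (hM : ENNReal.ofReal (q⁻¹ * (θ⁻¹ + (1 - θ)⁻¹)) ≤ M)
    (hsum : ∀ x, ∑' j, ENNReal.ofReal
      (twoSidedExp (θ * q) ((1 - θ) * q) (x + Real.log (w₁ j / w₀ j))) ≤ M) (ξ : ι → ℝ) :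
    interpNormE (weightedLqNorm w₀ q) (weightedLqNorm w₁ q) θ p ξ ≤
      2 * M ^ (1 / q) * weightedLqNorm (w₀ ^ (1 - θ) * w₁ ^ θ) p ξ := by
  have hp : 0 < p := hq.trans_le hqp
  have hK (x : ℝ) : KfunE (weightedLqNorm w₀ q) (weightedLqNorm w₁ q) (Real.exp x) ξ ≤
      2 * weightedLqNorm (w₀ ⊓ Real.exp x • w₁) q ξ :=
    KfunE_weightedLqNorm_le hq (fun j => (hw₀ j).le) (fun j => (hw₁ j).le) (Real.exp_pos x).le ξ
  have hdiv (y : ℝ≥0∞) : (y ^ q) ^ (p / q) = y ^ p := by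
    rw [← ENNReal.rpow_mul, mul_div_cancel₀ _ hq.ne']
  have hSchur : ∫⁻ x, (ENNReal.ofReal (Real.exp (-θ * x)) *
      weightedLqNorm (w₀ ⊓ Real.exp x • w₁) q ξ) ^ p ≤
        M ^ (p / q) * weightedLqNorm (w₀ ^ (1 - θ) * w₁ ^ θ) p ξ ^ p := by
    simp only [← hdiv (ENNReal.ofReal _ * _), ofReal_exp_mul_weightedLqNorm_inf_rpow hq hw₀ hw₁]
    refine (lintegral_rpow_tsum_mul_le (fun j => by fun_prop) hsum (fun j => ?_) _
      ((one_le_div hq).2 hqp)).trans_eq ?_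
    · exact (lintegral_twoSidedExp_mul_add_right hq hθ _).trans_le hM
    · simp only [hdiv, weightedLqNorm_rpow hp]
  calc interpNormE (weightedLqNorm w₀ q) (weightedLqNorm w₁ q) θ p ξ
      ≤ (∫⁻ x, 2 ^ p * (ENNReal.ofReal (Real.exp (-θ * x)) *
          weightedLqNorm (w₀ ⊓ Real.exp x • w₁) q ξ) ^ p) ^ (1 / p) := by
        rw [interpNormE_eq_lintegral_exp]
        gcongr with x
        grw [hK x, mul_left_comm, ENNReal.mul_rpow_of_nonneg _ _ hp.le]
    _ ≤ (2 ^ p * (M ^ (p / q) * weightedLqNorm (w₀ ^ (1 - θ) * w₁ ^ θ) p ξ ^ p)) ^ (1 / p) := by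
        rw [lintegral_const_mul' _ _ (by simp)]
        gcongr
    _ = 2 * M ^ (1 / q) * weightedLqNorm (w₀ ^ (1 - θ) * w₁ ^ θ) p ξ := by
        rw [ENNReal.mul_rpow_of_nonneg _ _ (by positivity),
          ENNReal.mul_rpow_of_nonneg _ _ (by positivity), one_div, ENNReal.rpow_rpow_inv hp.ne',
          ENNReal.rpow_rpow_inv hp.ne', ← ENNReal.rpow_mul, div_eq_mul_inv, mul_right_comm,
          mul_inv_cancel₀ hp.ne', one_mul, one_div, mul_assoc]

end Interpolation

section Dyadic

variable {p q θ : ℝ}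

/-- The weight `j ↦ 2 ^ (j * s)` on `ℤ` of the space `ℓ_q^s(ℤ)`, so that `lqsNorm s q` is
definitionally `weightedLqNorm (dyadicWeight s) q`. -/
noncomputable def dyadicWeight (s : ℝ) : ℤ → ℝ := fun j => 2 ^ (j * s)

lemma dyadicWeight_pos (s : ℝ) (j : ℤ) : 0 < dyadicWeight s j :=
  Real.rpow_pos_of_pos two_pos _

lemma dyadicWeight_rpow_mul_rpow (s₀ s₁ θ : ℝ) :
    dyadicWeight s₀ ^ (1 - θ) * dyadicWeight s₁ ^ θ = dyadicWeight ((1 - θ) * s₀ + θ * s₁) := by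
  ext j
  simp only [dyadicWeight, Pi.mul_apply, Pi.pow_apply]
  rw [← Real.rpow_mul zero_le_two, ← Real.rpow_mul zero_le_two, ← Real.rpow_add two_pos]
  ring_nf

lemma log_dyadicWeight_div (s₀ s₁ : ℝ) (j : ℤ) :
    Real.log (dyadicWeight s₁ j / dyadicWeight s₀ j) = j * ((s₁ - s₀) * Real.log 2) := by
  rw [dyadicWeight, dyadicWeight, ← Real.rpow_sub two_pos, Real.log_rpow two_pos]
  ring

lemma tsum_twoSidedExp_mul_le (hq : 0 < q) (hθ : θ ∈ Ioo (0 : ℝ) 1) {δ : ℝ} (hδ : δ ≠ 0) (x : ℝ) :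
    ∑' j : ℤ, ENNReal.ofReal (twoSidedExp (θ * q) ((1 - θ) * q) (x + j * δ)) ≤
      ENNReal.ofReal ((1 + (q * |δ|)⁻¹) * (θ⁻¹ + (1 - θ)⁻¹)) := by
  have hterm {a : ℝ} (ha : 0 < a) (ha₁ : a < 1) :
      1 + (a * q * |δ|)⁻¹ ≤ (1 + (q * |δ|)⁻¹) * a⁻¹ := by
    rw [mul_assoc, mul_inv, add_mul, one_mul, mul_comm a⁻¹]
    gcongr
    exact ((one_lt_inv₀ ha).2 ha₁).le
  have hθ₀ : 0 < θ := hθ.1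
  have hθ₁ : 0 < 1 - θ := sub_pos.2 hθ.2
  refine (tsum_twoSidedExp_le (mul_pos hθ₀ hq) (mul_pos hθ₁ hq) hδ x).trans ?_
  rw [← ENNReal.ofReal_add (by positivity) (by positivity), mul_add]
  exact ENNReal.ofReal_le_ofReal
    (add_le_add (hterm hθ₀ hθ.2) (hterm hθ₁ (sub_lt_self 1 hθ₀)))

theorem lqsNorm_le_interpNormE (s₀ s₁ : ℝ) (hq : 0 < q) (hqp : q ≤ p) (hθ : θ ∈ Ioo (0 : ℝ) 1)
    (ξ : ℤ → ℝ) :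
    ENNReal.ofReal ((2 * 2 ^ (1 + 1 / q))⁻¹ * p⁻¹ ^ (1 / p) *
          (θ ^ (-(1 / p)) + (1 - θ) ^ (-(1 / p)))) * lqsNorm ((1 - θ) * s₀ + θ * s₁) p ξ ≤
      interpNormE (lqsNorm s₀ q) (lqsNorm s₁ q) θ p ξ := by
  have hp : 0 < p := hq.trans_le hqp
  have hmain := weightedLqNorm_le_interpNormE hq hqp (dyadicWeight_pos s₀) (dyadicWeight_pos s₁)
    hθ ξ
  rw [dyadicWeight_rpow_mul_rpow] at hmain
  have htwo : ENNReal.ofReal (2 * 2 ^ (1 + 1 / q)) = 2 * 2 ^ (1 + 1 / q) := by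
    rw [ENNReal.ofReal_mul zero_le_two, ← ENNReal.ofReal_rpow_of_pos two_pos, ENNReal.ofReal_ofNat]
  rw [mul_assoc, ENNReal.ofReal_mul (by positivity), ENNReal.ofReal_inv_of_pos (by positivity),
    htwo, mul_assoc, ENNReal.inv_mul_le_iff (by simp) (by simp [ENNReal.mul_eq_top])]
  grw [ofReal_rpow_mul_le_two_mul hθ.1 (sub_pos.2 hθ.2) (by positivity) (by positivity), mul_assoc,
    mul_assoc]
  exact mul_le_mul_right hmain 2

theorem interpNormE_le_lqsNorm {s₀ s₁ : ℝ} (h01 : s₀ ≠ s₁) (hq : 0 < q) (hqp : q ≤ p)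
    (hθ : θ ∈ Ioo (0 : ℝ) 1) (ξ : ℤ → ℝ) :
    interpNormE (lqsNorm s₀ q) (lqsNorm s₁ q) θ p ξ ≤
      ENNReal.ofReal (2 * (2 * (1 + q⁻¹ + (q * |(s₁ - s₀) * Real.log 2|)⁻¹)) ^ (1 / q) *
          (θ ^ (-(1 / q)) + (1 - θ) ^ (-(1 / q)))) * lqsNorm ((1 - θ) * s₀ + θ * s₁) p ξ := by
  set δ := (s₁ - s₀) * Real.log 2
  have hδ : δ ≠ 0 := mul_ne_zero (sub_ne_zero.2 h01.symm) (Real.log_pos one_lt_two).ne'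
  set D := 1 + q⁻¹ + (q * |δ|)⁻¹
  have hq' : 0 < q⁻¹ := inv_pos.2 hq
  have hD : q⁻¹ ≤ D := le_add_of_le_of_nonneg (le_add_of_nonneg_left zero_le_one) (by positivity)
  have hD' : 1 + (q * |δ|)⁻¹ ≤ D := by
    simp only [D]
    gcongr
    exact le_add_of_nonneg_right hq'.le
  have hθ₀ : 0 < θ := hθ.1
  have hθ₁ : 0 < 1 - θ := sub_pos.2 hθ.2
  have hmain := interpNormE_le_weightedLqNorm (M := ENNReal.ofReal (D * (θ⁻¹ + (1 - θ)⁻¹)))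
    hq hqp (dyadicWeight_pos s₀) (dyadicWeight_pos s₁) hθ (by gcongr)
    (fun x => by
      simp only [log_dyadicWeight_div]
      grw [tsum_twoSidedExp_mul_le hq hθ hδ x, hD']) ξ
  rw [dyadicWeight_rpow_mul_rpow] at hmain
  refine hmain.trans (mul_le_mul_left ?_ _)
  grw [ofReal_mul_inv_add_inv_rpow_le hθ₀ hθ₁ (hq'.le.trans hD) (by positivity)]
  rw [mul_assoc, ENNReal.ofReal_mul zero_le_two, ENNReal.ofReal_ofNat]

end Dyadic

theorem stmt5_general (s0 s1 q p : ℝ) (h01 : s0 ≠ s1) (hq : 0 < q) (hqp : q ≤ p) :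
    ∃ c C : ℝ, 0 < c ∧ 0 < C ∧
      ∀ θ ∈ Set.Ioo (0 : ℝ) 1, ∀ ξ : ℤ → ℝ,
        ENNReal.ofReal (c * (θ ^ (-(1 / p)) + (1 - θ) ^ (-(1 / p)))) *
            lqsNorm ((1 - θ) * s0 + θ * s1) p ξ ≤
          interpNormE (lqsNorm s0 q) (lqsNorm s1 q) θ p ξ ∧
        interpNormE (lqsNorm s0 q) (lqsNorm s1 q) θ p ξ ≤
          ENNReal.ofReal (C * (θ ^ (-(1 / q)) + (1 - θ) ^ (-(1 / q)))) *
            lqsNorm ((1 - θ) * s0 + θ * s1) p ξ := by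
  have hp : 0 < p := hq.trans_le hqp
  exact ⟨_, _, by positivity, by positivity, fun θ hθ ξ =>
    ⟨lqsNorm_le_interpNormE s0 s1 hq hqp hθ ξ, interpNormE_le_lqsNorm h01 hq hqp hθ ξ⟩⟩

/-- Let `s₀ < s₁`, `θ ∈ (0,1)`, `s = (1-θ)s₀+θs₁`, `p ≥ q > 0`. Then for all
sequences `ξ = (ξ_j)_{j∈ℤ}`:
`c (θ^{-1/p} + (1-θ)^{-1/p}) ‖ξ‖_{ℓ_p^s} ≤ ‖ξ‖_{(ℓ_q^{s₀}, ℓ_q^{s₁})_{θ,p}}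
  ≤ C (θ^{-1/q} + (1-θ)^{-1/q}) ‖ξ‖_{ℓ_p^s}` with `c, C > 0` independent of `θ`. -/
theorem stmt5 (s0 s1 q p : ℝ) (h01 : s0 < s1) (hq : 0 < q) (hqp : q ≤ p) :
    ∃ c C : ℝ, 0 < c ∧ 0 < C ∧
      ∀ θ ∈ Set.Ioo (0 : ℝ) 1, ∀ ξ : ℤ → ℝ,
        ENNReal.ofReal (c * (θ ^ (-(1 / p)) + (1 - θ) ^ (-(1 / p)))) *
            lqsNorm ((1 - θ) * s0 + θ * s1) p ξ ≤
          interpNormE (lqsNorm s0 q) (lqsNorm s1 q) θ p ξ ∧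
        interpNormE (lqsNorm s0 q) (lqsNorm s1 q) θ p ξ ≤
          ENNReal.ofReal (C * (θ ^ (-(1 / q)) + (1 - θ) ^ (-(1 / q)))) *
            lqsNorm ((1 - θ) * s0 + θ * s1) p ξ :=
  stmt5_general s0 s1 q p h01.ne hq hqp
end

section
/- Let (A₀, A₁) be a compatible pair, θ ∈ (0,1) and 0 < p ≤ q < ∞. Then (θ(1-θ)p)^{1/p} ‖f‖_{(A₀,A₁)_{θ,p}} ≥ c (θ(1-θ)q)^{1/q} ‖f‖_{(A₀,A₁)_{θ,q}} for all f, with c > 0 independent of θ, p, q. -/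
open scoped ENNReal

/-!
Put `h(t) = t^(-θ) K(t, f)` and let `μ` be the measure `h^p dt/t`, of total mass `J`, which may be
assumed finite. Since `K` is nondecreasing and `K(t)/t` nonincreasing,
`h(u) ≥ (u/t)^(1-θ) h(t)` for `u ≤ t` and `h(u) ≥ (u/t)^(-θ) h(t)` for `u ≥ t`; integrating
`h^p du/u` over each side of `t` gives `h(t)^p ≤ (1-θ)p μ(0,t]` and `h(t)^p ≤ θp μ(t,∞)`.
As `μ` has no atoms, `t ↦ μ(0,t]` carries `μ` to Lebesgue measure on `[0, J]`, so that
`∫ h^q dt/t = ∫ (h^p)^(q/p-1) dμ ≤ ∫_0^J min((1-θ)p y, θp (J-y))^(q/p-1) dy`.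
The last integral equals `(θ(1-θ)p J)^(q/p) / (θ(1-θ)q)`, which is the claim with `c = 1`.
-/

open MeasureTheory Set Filter

open scoped Topology

section CumulativeMass

variable (μ : Measure ℝ) [IsFiniteMeasure μ]

lemma monotone_measureReal_Iic : Monotone fun x => μ.real (Iic x) :=
  fun _ _ hxy => measureReal_mono (Iic_subset_Iic.2 hxy)

lemma tendsto_measureReal_Iic_atTop :
    Tendsto (fun x => μ.real (Iic x)) atTop (𝓝 (μ.real univ)) :=
  (ENNReal.tendsto_toReal (measure_ne_top μ univ)).comp (tendsto_measure_Iic_atTop μ)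

lemma tendsto_measureReal_Iic_atBot : Tendsto (fun x => μ.real (Iic x)) atBot (𝓝 0) := by
  have htends := tendsto_measure_iInter_atBot (μ := μ)
    (fun x : ℝ => measurableSet_Iic.nullMeasurableSet (s := Iic x))
    (fun _ _ hxy => Iic_subset_Iic.2 hxy) ⟨0, measure_ne_top μ _⟩
  rw [iInter_Iic_eq_empty_iff.2 (by simp [not_bddBelow_univ]), measure_empty] at htends
  exact (ENNReal.tendsto_toReal ENNReal.zero_ne_top).comp htends

lemma measureReal_Ioi_eq_sub (x : ℝ) : μ.real (Ioi x) = μ.real univ - μ.real (Iic x) := by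
  rw [← compl_Iic, measureReal_compl measurableSet_Iic]

variable [NullSingletonClass μ]

lemma continuous_measureReal_Iic : Continuous fun x => μ.real (Iic x) := by
  have hprimitive : Continuous fun x => ∫ _ in (0 : ℝ)..x, (1 : ℝ) ∂μ :=
    intervalIntegral.continuous_primitive (fun _ _ => intervalIntegrable_const) 0
  refine (hprimitive.const_add (μ.real (Iic 0))).congr fun x => ?_
  rw [← intervalIntegral.integral_Iic_sub_Iic integrableOn_const integrableOn_const]
  simp

lemma measure_setOf_measureReal_Iic_le {y : ℝ} (hyμ : y < μ.real univ) :
    μ {x | μ.real (Iic x) ≤ y} = ENNReal.ofReal y := by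
  set S := {x | μ.real (Iic x) ≤ y}
  have hcont := continuous_measureReal_Iic μ
  obtain ⟨b, hb⟩ := ((tendsto_measureReal_Iic_atTop μ).eventually_const_lt hyμ).exists
  rcases S.eq_empty_or_nonempty with hempty | hnonempty
  · have hy0 : y ≤ 0 := ge_of_tendsto' (tendsto_measureReal_Iic_atBot μ) fun x =>
      (not_le.1 (eq_empty_iff_forall_notMem.1 hempty x)).le
    rw [hempty, measure_empty, ENNReal.ofReal_of_nonpos hy0]
  · have hbdd : BddAbove S := ⟨b, fun x hx =>
      ((monotone_measureReal_Iic μ).reflect_lt (lt_of_le_of_lt hx hb)).le⟩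
    have hgreatest := (isClosed_le hcont continuous_const).isGreatest_csSup hnonempty hbdd
    obtain ⟨c, hc⟩ : y ∈ range fun x => μ.real (Iic x) :=
      mem_range_of_exists_le_of_exists_ge hcont hnonempty ⟨b, hb.le⟩
    have hvalue : μ.real (Iic (sSup S)) = y :=
      hgreatest.1.antisymm (hc ▸ monotone_measureReal_Iic μ (hgreatest.2 hc.le))
    have hIic : S = Iic (sSup S) := Subset.antisymm hgreatest.2 fun x hx =>
      (monotone_measureReal_Iic μ hx).trans hgreatest.1
    rw [hIic, ← hvalue, ofReal_measureReal]

lemma map_measureReal_Iic_eq_volume_restrict :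
    μ.map (fun x => μ.real (Iic x)) = volume.restrict (Icc 0 (μ.real univ)) := by
  refine Measure.ext_of_Iic _ _ fun y => ?_
  rw [Measure.map_apply (monotone_measureReal_Iic μ).measurable measurableSet_Iic,
    Measure.restrict_apply measurableSet_Iic, inter_comm, ← Ici_inter_Iic, inter_assoc,
    Iic_inter_Iic, Ici_inter_Iic, Real.volume_Icc, sub_zero]
  change μ {x | μ.real (Iic x) ≤ y} = _
  rcases lt_or_ge y (μ.real univ) with hyμ | hyμ
  · rw [measure_setOf_measureReal_Iic_le μ hyμ, inf_eq_right.2 hyμ.le]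
  · have huniv : {x | μ.real (Iic x) ≤ y} = univ :=
      eq_univ_of_forall fun x => (measureReal_mono (subset_univ _)).trans hyμ
    rw [huniv, inf_eq_left.2 hyμ, ofReal_measureReal]

end CumulativeMass

section TailBound

open intervalIntegral in
lemma integral_rpow_mul_left {a s : ℝ} (ha : a ≠ 0) (hs : 0 ≤ s) (c : ℝ) :
    ∫ y in (0 : ℝ)..c, (a * y) ^ s = a⁻¹ * ((a * c) ^ (s + 1) / (s + 1)) := by
  rw [integral_comp_mul_left (fun y => y ^ s) ha, mul_zero,
    integral_rpow (Or.inl (by linarith)), Real.zero_rpow (by linarith), sub_zero, smul_eq_mul]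

lemma integral_min_rpow {a b s L : ℝ} (ha : 0 < a) (hb : 0 < b) (hs : 0 ≤ s) (hL : 0 ≤ L) :
    a * b / (a + b) * (s + 1) * ∫ y in (0 : ℝ)..L, min (a * y) (b * (L - y)) ^ s =
      (a * b / (a + b) * L) ^ (s + 1) := by
  set c := b * L / (a + b) with hc
  set m := a * b / (a + b) with hm
  have hc0 : 0 ≤ c := by positivity
  have hcL : c ≤ L := (div_le_iff₀ (by positivity)).2 (by nlinarith)
  have hcross : a * c = b * (L - c) := by rw [hc]; field_simp; ring
  have hleft : ∫ y in (0 : ℝ)..c, min (a * y) (b * (L - y)) ^ s =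
      a⁻¹ * ((m * L) ^ (s + 1) / (s + 1)) := by
    rw [show m * L = a * c by rw [hm, hc]; ring, ← integral_rpow_mul_left ha.ne' hs]
    refine intervalIntegral.integral_congr fun y hy => ?_
    rw [uIcc_of_le hc0] at hy
    have hmin : a * y ≤ b * (L - y) := by nlinarith [hy.2]
    simp only [min_eq_left hmin]
  have hright : ∫ y in c..L, min (a * y) (b * (L - y)) ^ s =
      b⁻¹ * ((m * L) ^ (s + 1) / (s + 1)) := by
    rw [show m * L = b * (L - c) by rw [← hcross, hm, hc]; ring,
      ← integral_rpow_mul_left hb.ne' hs, ← sub_self L,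
      ← intervalIntegral.integral_comp_sub_left (fun y => (b * y) ^ s) L]
    refine intervalIntegral.integral_congr fun y hy => ?_
    rw [uIcc_of_le hcL] at hy
    have hmin : b * (L - y) ≤ a * y := by nlinarith [hy.1]
    simp only [min_eq_right hmin]
  have hcont : Continuous fun y => min (a * y) (b * (L - y)) ^ s :=
    (by fun_prop : Continuous fun y => min (a * y) (b * (L - y))).rpow_const fun _ => Or.inr hs
  rw [← intervalIntegral.integral_add_adjacent_intervals (hcont.intervalIntegrable 0 c)
    (hcont.intervalIntegrable c L), hleft, hright, hm]
  field_simp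
  ring

lemma setLIntegral_min_rpow {a b s L : ℝ} (ha : 0 < a) (hb : 0 < b) (hs : 0 ≤ s) (hL : 0 ≤ L) :
    ENNReal.ofReal (a * b / (a + b) * (s + 1)) *
        ∫⁻ y in Icc 0 L, ENNReal.ofReal (min (a * y) (b * (L - y)) ^ s) =
      ENNReal.ofReal (a * b / (a + b) * L) ^ (s + 1) := by
  have hcont : Continuous fun y => min (a * y) (b * (L - y)) ^ s :=
    (by fun_prop : Continuous fun y => min (a * y) (b * (L - y))).rpow_const fun _ => Or.inr hs
  have hnonneg : 0 ≤ᵐ[volume.restrict (Icc 0 L)] fun y => min (a * y) (b * (L - y)) ^ s :=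
    ae_restrict_of_forall_mem measurableSet_Icc fun y hy => Real.rpow_nonneg
      (le_min (mul_nonneg ha.le hy.1) (mul_nonneg hb.le (sub_nonneg.2 hy.2))) s
  rw [← ofReal_integral_eq_lintegral_ofReal hcont.integrableOn_Icc hnonneg,
    integral_Icc_eq_integral_Ioc, ← intervalIntegral.integral_of_le hL,
    ← ENNReal.ofReal_mul (by positivity), integral_min_rpow ha hb hs hL,
    ENNReal.ofReal_rpow_of_nonneg (by positivity) (by positivity)]

lemma lintegral_rpow_le_of_le_mul_measure_tails (μ : Measure ℝ) [IsFiniteMeasure μ]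
    [NullSingletonClass μ] {a b s : ℝ} (ha : 0 < a) (hb : 0 < b) (hs : 0 ≤ s) {F : ℝ → ℝ≥0∞}
    (hIic : ∀ᵐ t ∂μ, F t ≤ ENNReal.ofReal a * μ (Iic t))
    (hIoi : ∀ᵐ t ∂μ, F t ≤ ENNReal.ofReal b * μ (Ioi t)) :
    ENNReal.ofReal (a * b / (a + b) * (s + 1)) * ∫⁻ t, F t ^ s ∂μ ≤
      (ENNReal.ofReal (a * b / (a + b)) * μ univ) ^ (s + 1) := by
  set L := μ.real univ
  set ψ : ℝ → ℝ := fun y => min (a * y) (b * (L - y))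
  have hpointwise : ∀ᵐ t ∂μ, F t ^ s ≤ ENNReal.ofReal (ψ (μ.real (Iic t)) ^ s) := by
    filter_upwards [hIic, hIoi] with t hleft hright
    rw [← ofReal_measureReal, ← ENNReal.ofReal_mul ha.le] at hleft
    rw [← ofReal_measureReal, ← ENNReal.ofReal_mul hb.le, measureReal_Ioi_eq_sub] at hright
    have hψ : 0 ≤ ψ (μ.real (Iic t)) := le_min (mul_nonneg ha.le measureReal_nonneg)
      (mul_nonneg hb.le (sub_nonneg.2 (measureReal_mono (subset_univ _))))
    rw [← ENNReal.ofReal_rpow_of_nonneg hψ hs, ENNReal.ofReal_min]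
    exact ENNReal.rpow_le_rpow (le_min hleft hright) hs
  have hψmeas : Measurable fun y => ENNReal.ofReal (ψ y ^ s) := by fun_prop
  calc ENNReal.ofReal (a * b / (a + b) * (s + 1)) * ∫⁻ t, F t ^ s ∂μ
      ≤ ENNReal.ofReal (a * b / (a + b) * (s + 1)) *
          ∫⁻ t, ENNReal.ofReal (ψ (μ.real (Iic t)) ^ s) ∂μ := by
        gcongr 1; exact lintegral_mono_ae hpointwise
    _ = ENNReal.ofReal (a * b / (a + b) * (s + 1)) *
          ∫⁻ y in Icc 0 L, ENNReal.ofReal (ψ y ^ s) := by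
        rw [← map_measureReal_Iic_eq_volume_restrict,
          lintegral_map hψmeas (monotone_measureReal_Iic μ).measurable]
    _ = (ENNReal.ofReal (a * b / (a + b)) * μ univ) ^ (s + 1) := by
        rw [setLIntegral_min_rpow ha hb hs measureReal_nonneg,
          ENNReal.ofReal_mul (by positivity), ofReal_measureReal]

end TailBound

section PowerGrowth

lemma setLIntegral_Ioc_div_rpow {γ t : ℝ} (hγ : 0 < γ) (ht : 0 < t) :
    ENNReal.ofReal γ * ∫⁻ u in Ioc 0 t, ENNReal.ofReal ((u / t) ^ γ / u) = 1 := by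
  have hrw : EqOn (fun u => t ^ (-γ) * u ^ (γ - 1)) (fun u => (u / t) ^ γ / u) (Ioc 0 t) := by
    intro u hu
    simp only [Real.div_rpow hu.1.le ht.le, Real.rpow_sub_one hu.1.ne', Real.rpow_neg ht.le]
    ring
  have hint : IntegrableOn (fun u => t ^ (-γ) * u ^ (γ - 1)) (Ioc 0 t) :=
    ((intervalIntegral.intervalIntegrable_rpow' (by linarith)).1).const_mul _
  have hvalue : ∫ u in Ioc 0 t, (u / t) ^ γ / u = γ⁻¹ := by
    rw [← setIntegral_congr_fun measurableSet_Ioc hrw, integral_const_mul,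
      ← intervalIntegral.integral_of_le ht.le, integral_rpow (Or.inl (by linarith)),
      sub_add_cancel, Real.zero_rpow hγ.ne', sub_zero, ← mul_div_assoc, ← Real.rpow_add ht,
      neg_add_cancel, Real.rpow_zero, one_div]
  rw [← ofReal_integral_eq_lintegral_ofReal (hint.congr_fun hrw measurableSet_Ioc)
    (ae_restrict_of_forall_mem measurableSet_Ioc fun u hu =>
      div_nonneg (Real.rpow_nonneg (div_nonneg hu.1.le ht.le) _) hu.1.le), hvalue,
    ← ENNReal.ofReal_mul hγ.le, mul_inv_cancel₀ hγ.ne', ENNReal.ofReal_one]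

lemma setLIntegral_Ioi_div_rpow_neg {γ t : ℝ} (hγ : 0 < γ) (ht : 0 < t) :
    ENNReal.ofReal γ * ∫⁻ u in Ioi t, ENNReal.ofReal ((u / t) ^ (-γ) / u) = 1 := by
  have hrw : EqOn (fun u => t ^ γ * u ^ (-γ - 1)) (fun u => (u / t) ^ (-γ) / u) (Ioi t) := by
    intro u hu
    have hu0 : 0 < u := ht.trans hu
    simp only [Real.div_rpow hu0.le ht.le, Real.rpow_sub_one hu0.ne', Real.rpow_neg ht.le]
    field_simp
  have hint : IntegrableOn (fun u => t ^ γ * u ^ (-γ - 1)) (Ioi t) :=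
    (integrableOn_Ioi_rpow_of_lt (by linarith) ht).const_mul _
  have hvalue : ∫ u in Ioi t, (u / t) ^ (-γ) / u = γ⁻¹ := by
    rw [← setIntegral_congr_fun measurableSet_Ioi hrw, integral_const_mul,
      integral_Ioi_rpow_of_lt (by linarith) ht, sub_add_cancel, neg_div_neg_eq, ← mul_div_assoc,
      ← Real.rpow_add ht, add_neg_cancel, Real.rpow_zero, one_div]
  rw [← ofReal_integral_eq_lintegral_ofReal (hint.congr_fun hrw measurableSet_Ioi)
    (ae_restrict_of_forall_mem measurableSet_Ioi fun u hu =>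
      div_nonneg (Real.rpow_nonneg (div_nonneg (ht.trans hu).le ht.le) _) (ht.trans hu).le),
    hvalue, ← ENNReal.ofReal_mul hγ.le, mul_inv_cancel₀ hγ.ne', ENNReal.ofReal_one]

lemma rpow_mul_setLIntegral_div_rpow_le {h : ℝ → ℝ≥0∞} {s : Set ℝ} {α p t : ℝ}
    (hs : MeasurableSet s) (hs0 : s ⊆ Ioi 0) (hp : 0 ≤ p) (ht : 0 < t)
    (hgrowth : ∀ u ∈ s, ENNReal.ofReal ((u / t) ^ α) * h t ≤ h u) :
    (∫⁻ u in s, ENNReal.ofReal ((u / t) ^ (α * p) / u)) * h t ^ p ≤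
      ∫⁻ u in s, h u ^ p / ENNReal.ofReal u := by
  refine (lintegral_mul_const_le _ _).trans (setLIntegral_mono' hs fun u hu => ?_)
  have hu0 : 0 < u := hs0 hu
  have hratio : 0 ≤ (u / t) ^ α := Real.rpow_nonneg (div_pos hu0 ht).le _
  calc ENNReal.ofReal ((u / t) ^ (α * p) / u) * h t ^ p
      = (ENNReal.ofReal ((u / t) ^ α) * h t) ^ p / ENNReal.ofReal u := by
        rw [ENNReal.mul_rpow_of_nonneg _ _ hp, ENNReal.ofReal_rpow_of_nonneg hratio hp,
          ← Real.rpow_mul (div_pos hu0 ht).le, ENNReal.ofReal_div_of_pos hu0,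
          ENNReal.mul_div_right_comm]
    _ ≤ h u ^ p / ENNReal.ofReal u := by gcongr; exact hgrowth u hu

lemma rpow_le_mul_setLIntegral_Ioc {h : ℝ → ℝ≥0∞} {α p t : ℝ} (hα : 0 < α) (hp : 0 < p)
    (ht : 0 < t) (hgrowth : ∀ u ∈ Ioc 0 t, ENNReal.ofReal ((u / t) ^ α) * h t ≤ h u) :
    h t ^ p ≤ ENNReal.ofReal (α * p) * ∫⁻ u in Ioc 0 t, h u ^ p / ENNReal.ofReal u :=
  calc h t ^ p
      = ENNReal.ofReal (α * p) *
          ((∫⁻ u in Ioc 0 t, ENNReal.ofReal ((u / t) ^ (α * p) / u)) * h t ^ p) := by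
        rw [← mul_assoc, setLIntegral_Ioc_div_rpow (mul_pos hα hp) ht, one_mul]
    _ ≤ ENNReal.ofReal (α * p) * ∫⁻ u in Ioc 0 t, h u ^ p / ENNReal.ofReal u := by
        gcongr
        exact rpow_mul_setLIntegral_div_rpow_le measurableSet_Ioc Ioc_subset_Ioi_self hp.le ht
          hgrowth

lemma rpow_le_mul_setLIntegral_Ioi {h : ℝ → ℝ≥0∞} {β p t : ℝ} (hβ : 0 < β) (hp : 0 < p)
    (ht : 0 < t) (hdecay : ∀ u ∈ Ioi t, ENNReal.ofReal ((u / t) ^ (-β)) * h t ≤ h u) :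
    h t ^ p ≤ ENNReal.ofReal (β * p) * ∫⁻ u in Ioi t, h u ^ p / ENNReal.ofReal u :=
  calc h t ^ p
      = ENNReal.ofReal (β * p) *
          ((∫⁻ u in Ioi t, ENNReal.ofReal ((u / t) ^ (-β * p) / u)) * h t ^ p) := by
        rw [← mul_assoc, neg_mul, setLIntegral_Ioi_div_rpow_neg (mul_pos hβ hp) ht, one_mul]
    _ ≤ ENNReal.ofReal (β * p) * ∫⁻ u in Ioi t, h u ^ p / ENNReal.ofReal u := by
        gcongr
        exact rpow_mul_setLIntegral_div_rpow_le measurableSet_Ioi (Ioi_subset_Ioi ht.le) hp.le ht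
          hdecay

/-- The measure `h(t)ᵖ dt/t` on the half-line `(0, ∞)`, extended by zero to `ℝ` so that its
distribution function is available. -/
noncomputable def rpowDivMeasure (h : ℝ → ℝ≥0∞) (p : ℝ) : Measure ℝ :=
  (volume.restrict (Ioi 0)).withDensity fun t => h t ^ p / ENNReal.ofReal t

lemma rpowDivMeasure_apply (h : ℝ → ℝ≥0∞) (p : ℝ) {s : Set ℝ} (hs : MeasurableSet s) :
    rpowDivMeasure h p s = ∫⁻ t in s ∩ Ioi 0, h t ^ p / ENNReal.ofReal t := by
  rw [rpowDivMeasure, withDensity_apply _ hs, Measure.restrict_restrict hs]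

lemma rpowDivMeasure_univ (h : ℝ → ℝ≥0∞) (p : ℝ) :
    rpowDivMeasure h p univ = ∫⁻ t in Ioi 0, h t ^ p / ENNReal.ofReal t := by
  rw [rpowDivMeasure_apply h p MeasurableSet.univ, univ_inter]

instance (h : ℝ → ℝ≥0∞) (p : ℝ) : NullSingletonClass (rpowDivMeasure h p) :=
  inferInstanceAs (NullSingletonClass ((volume.restrict (Ioi 0)).withDensity _))

lemma ae_pos_rpowDivMeasure (h : ℝ → ℝ≥0∞) (p : ℝ) : ∀ᵐ t ∂rpowDivMeasure h p, 0 < t :=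
  (withDensity_absolutelyContinuous _ _).ae_le (ae_restrict_mem measurableSet_Ioi)

lemma lintegral_rpow_rpowDivMeasure {h : ℝ → ℝ≥0∞} (hmeas : Measurable h) {p r : ℝ}
    (hp : 0 ≤ p) (hr : 0 ≤ r) :
    ∫⁻ t, h t ^ r ∂rpowDivMeasure h p =
      ∫⁻ t in Ioi 0, h t ^ (p + r) / ENNReal.ofReal t := by
  rw [rpowDivMeasure, lintegral_withDensity_eq_lintegral_mul _ (by fun_prop) (by fun_prop)]
  refine lintegral_congr fun t => ?_
  rw [Pi.mul_apply, ENNReal.rpow_add_of_nonneg _ _ hp hr, ENNReal.mul_div_right_comm]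

lemma mul_setLIntegral_rpow_le_of_power_growth {h : ℝ → ℝ≥0∞} (hmeas : Measurable h)
    {α β p q : ℝ} (hα : 0 < α) (hβ : 0 < β) (hp : 0 < p) (hpq : p ≤ q)
    (hgrowth : ∀ t > 0, ∀ u ∈ Ioc 0 t, ENNReal.ofReal ((u / t) ^ α) * h t ≤ h u)
    (hdecay : ∀ t > 0, ∀ u ∈ Ioi t, ENNReal.ofReal ((u / t) ^ (-β)) * h t ≤ h u) :
    ENNReal.ofReal (α * β / (α + β) * q) * ∫⁻ t in Ioi 0, h t ^ q / ENNReal.ofReal t ≤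
      (ENNReal.ofReal (α * β / (α + β) * p) * ∫⁻ t in Ioi 0, h t ^ p / ENNReal.ofReal t) ^
        (q / p) := by
  have hq : 0 < q := hp.trans_le hpq
  have hm : α * p * (β * p) / (α * p + β * p) = α * β / (α + β) * p := by field_simp
  set μ := rpowDivMeasure h p with hμ
  rcases eq_or_ne (μ univ) ⊤ with htop | hfinite
  · rw [← rpowDivMeasure_univ h p, ← hμ, htop,
      ENNReal.mul_top (ENNReal.ofReal_pos.2 (by positivity)).ne',
      ENNReal.top_rpow_of_pos (div_pos hq hp)]
    exact le_top
  have : IsFiniteMeasure μ := ⟨hfinite.lt_top⟩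
  have hIic : ∀ᵐ t ∂μ, h t ^ p ≤ ENNReal.ofReal (α * p) * μ (Iic t) := by
    filter_upwards [ae_pos_rpowDivMeasure h p] with t ht
    rw [hμ, rpowDivMeasure_apply h p measurableSet_Iic, inter_comm, Ioi_inter_Iic]
    exact rpow_le_mul_setLIntegral_Ioc hα hp ht (hgrowth t ht)
  have hIoi : ∀ᵐ t ∂μ, h t ^ p ≤ ENNReal.ofReal (β * p) * μ (Ioi t) := by
    filter_upwards [ae_pos_rpowDivMeasure h p] with t ht
    rw [hμ, rpowDivMeasure_apply h p measurableSet_Ioi, Ioi_inter_Ioi, sup_eq_left.2 ht.le]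
    exact rpow_le_mul_setLIntegral_Ioi hβ hp ht (hdecay t ht)
  have hs : 0 ≤ q / p - 1 := sub_nonneg.2 ((one_le_div hp).2 hpq)
  have htails := lintegral_rpow_le_of_le_mul_measure_tails μ (mul_pos hα hp) (mul_pos hβ hp)
    hs hIic hIoi
  have hexp : p * (q / p - 1) = q - p := by field_simp
  have hq_eq : α * β / (α + β) * p * (q / p) = α * β / (α + β) * q := by field_simp
  simp only [← ENNReal.rpow_mul, hexp] at htails
  rwa [hm, sub_add_cancel, hq_eq, hμ, lintegral_rpow_rpowDivMeasure hmeas hp.le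
    (sub_nonneg.2 hpq), add_sub_cancel, rpowDivMeasure_univ] at htails

end PowerGrowth

section KFunctional

variable {V : Type*} [AddCommGroup V] (N0 N1 : V → ℝ≥0∞) (f : V)

lemma monotone_KfunE : Monotone fun t => KfunE N0 N1 t f := by
  intro s t hst
  refine iInf_mono fun f0 => iInf_mono fun f1 => iInf_mono fun _ => ?_
  gcongr

lemma ofReal_div_mul_KfunE_le {u t : ℝ} (hu : 0 < u) (hut : u ≤ t) :
    ENNReal.ofReal (u / t) * KfunE N0 N1 t f ≤ KfunE N0 N1 u f := by
  have ht : 0 < t := hu.trans_le hut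
  refine le_iInf fun f0 => le_iInf fun f1 => le_iInf fun hf => ?_
  calc ENNReal.ofReal (u / t) * KfunE N0 N1 t f
      ≤ ENNReal.ofReal (u / t) * (N0 f0 + ENNReal.ofReal t * N1 f1) := by
        gcongr
        exact iInf_le_of_le f0 (iInf_le_of_le f1 (iInf_le _ hf))
    _ = ENNReal.ofReal (u / t) * N0 f0 + ENNReal.ofReal u * N1 f1 := by
        rw [mul_add, ← mul_assoc, ← ENNReal.ofReal_mul (by positivity), div_mul_cancel₀ _ ht.ne']
    _ ≤ N0 f0 + ENNReal.ofReal u * N1 f1 := by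
        gcongr
        exact mul_le_of_le_one_left' (ENNReal.ofReal_le_one.2 ((div_le_one ht).2 hut))

lemma measurable_rpow_mul_KfunE (θ : ℝ) :
    Measurable fun t => ENNReal.ofReal (t ^ (-θ)) * KfunE N0 N1 t f :=
  (by fun_prop : Measurable fun t : ℝ => ENNReal.ofReal (t ^ (-θ))).mul
    (monotone_KfunE N0 N1 f).measurable

lemma ofReal_div_rpow_mul_rpow_mul_KfunE_le (θ : ℝ) {u t : ℝ} (hu : 0 < u) (hut : u ≤ t) :
    ENNReal.ofReal ((u / t) ^ (1 - θ)) * (ENNReal.ofReal (t ^ (-θ)) * KfunE N0 N1 t f) ≤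
      ENNReal.ofReal (u ^ (-θ)) * KfunE N0 N1 u f := by
  have ht : 0 < t := hu.trans_le hut
  have hpow : (u / t) ^ (1 - θ) * t ^ (-θ) = u ^ (-θ) * (u / t) := by
    rw [sub_eq_neg_add, Real.rpow_add_one (div_pos hu ht).ne', Real.div_rpow hu.le ht.le]
    field_simp
  calc _ = ENNReal.ofReal (u ^ (-θ)) * (ENNReal.ofReal (u / t) * KfunE N0 N1 t f) := by
        rw [← mul_assoc, ← ENNReal.ofReal_mul (by positivity), hpow,
          ENNReal.ofReal_mul (by positivity), mul_assoc]
    _ ≤ ENNReal.ofReal (u ^ (-θ)) * KfunE N0 N1 u f := by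
        gcongr
        exact ofReal_div_mul_KfunE_le N0 N1 f hu hut

lemma ofReal_div_rpow_neg_mul_rpow_mul_KfunE_le (θ : ℝ) {t u : ℝ} (ht : 0 < t) (htu : t ≤ u) :
    ENNReal.ofReal ((u / t) ^ (-θ)) * (ENNReal.ofReal (t ^ (-θ)) * KfunE N0 N1 t f) ≤
      ENNReal.ofReal (u ^ (-θ)) * KfunE N0 N1 u f := by
  have hu : 0 < u := ht.trans_le htu
  rw [← mul_assoc, ← ENNReal.ofReal_mul (by positivity),
    ← Real.mul_rpow (by positivity) ht.le, div_mul_cancel₀ _ ht.ne']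
  gcongr
  exact monotone_KfunE N0 N1 f htu

lemma ofReal_rpow_mul_interpNormE (θ : ℝ) {c r : ℝ} (hc : 0 < c) (hr : 0 < r) :
    ENNReal.ofReal (c ^ (1 / r)) * interpNormE N0 N1 θ r f =
      (ENNReal.ofReal c * ∫⁻ t in Ioi 0,
        (ENNReal.ofReal (t ^ (-θ)) * KfunE N0 N1 t f) ^ r / ENNReal.ofReal t) ^ (1 / r) := by
  rw [interpNormE, ← ENNReal.ofReal_rpow_of_pos hc,
    ENNReal.mul_rpow_of_nonneg _ _ (one_div_nonneg.2 hr.le)]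

end KFunctional

theorem stmt8_general {V : Type*} [AddCommGroup V] (N0 N1 : V → ℝ≥0∞) {p q θ : ℝ}
    (hp : 0 < p) (hpq : p ≤ q) (hθ : 0 < θ) (hθ1 : θ < 1) (f : V) :
    ENNReal.ofReal ((θ * (1 - θ) * q) ^ (1 / q)) * interpNormE N0 N1 θ q f ≤
      ENNReal.ofReal ((θ * (1 - θ) * p) ^ (1 / p)) * interpNormE N0 N1 θ p f := by
  have hq : 0 < q := hp.trans_le hpq
  have hθ' : 0 < 1 - θ := sub_pos.2 hθ1
  have hm : (1 - θ) * θ / (1 - θ + θ) = θ * (1 - θ) := by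
    rw [sub_add_cancel, div_one, mul_comm]
  have hpower := mul_setLIntegral_rpow_le_of_power_growth
    (measurable_rpow_mul_KfunE N0 N1 f θ) hθ' hθ hp hpq
    (fun t _ u hu => ofReal_div_rpow_mul_rpow_mul_KfunE_le N0 N1 f θ hu.1 hu.2)
    (fun t ht u hu => ofReal_div_rpow_neg_mul_rpow_mul_KfunE_le N0 N1 f θ ht (le_of_lt hu))
  rw [hm] at hpower
  rw [ofReal_rpow_mul_interpNormE N0 N1 f θ (by positivity) hq,
    ofReal_rpow_mul_interpNormE N0 N1 f θ (by positivity) hp]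
  refine (ENNReal.rpow_le_rpow hpower (one_div_nonneg.2 hq.le)).trans_eq ?_
  rw [← ENNReal.rpow_mul, mul_one_div, div_div_cancel_left' hq.ne', one_div]

/-- Monotonicity of normalized interpolation norms: for a compatible pair `(A₀, A₁)`,
`θ ∈ (0,1)` and `0 < p ≤ q < ∞`,
`(θ(1-θ)p)^{1/p} ‖f‖_{(A₀,A₁)_{θ,p}} ≥ c (θ(1-θ)q)^{1/q} ‖f‖_{(A₀,A₁)_{θ,q}}`
with `c > 0` independent of `θ`, `p`, `q`. -/
theorem stmt8 {V : Type*} [AddCommGroup V] (N0 N1 : V → ℝ≥0∞)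
    (hN00 : N0 0 = 0) (hN10 : N1 0 = 0) :
    ∃ c : ℝ, 0 < c ∧
      ∀ p q θ : ℝ, 0 < p → p ≤ q → 0 < θ → θ < 1 → ∀ f : V,
        ENNReal.ofReal c *
            (ENNReal.ofReal ((θ * (1 - θ) * q) ^ (1 / q)) * interpNormE N0 N1 θ q f) ≤
          ENNReal.ofReal ((θ * (1 - θ) * p) ^ (1 / p)) * interpNormE N0 N1 θ p f := by
  exact ⟨1, one_pos, fun p q θ hp hpq hθ hθ1 f => by
    simpa using stmt8_general N0 N1 hp hpq hθ hθ1 f⟩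
end
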